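/- Let l = (p−3)/2, let i ∈ ℕ₀, and let γ = Σ_{a=2}^{l+1} c_a·ϑ_a with c_2, …, c_{l+1} ∈ K. For 2 ≤ a ≤ l+1 set u_a = (θ^a − 1)(θ^{1−a} − 1) and v_a = (θ^a − θ^{1−a})·u_a^i·κ^{−(2i+1)} ∈ K; let V_i be the l × l diagonal matrix with diagonal entries v_a (a = 2, …, l+1), and let B be the l × l Vandermonde matrix with entries B_{a,j} = u_a^{j−1} for 2 ≤ a ≤ l+1 and 1 ≤ j ≤ l. If γ ∈ Ĥ_i, then the row vector (c_2, …, c_{l+1})·V_i·B lies in O^l ∖ 𝔭^l; that is, each of its l entries lies in O and at least one entry does not lie in 𝔭. -/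

import Mathlib

set_option synthInstance.maxHeartbeats 1000000
set_option maxHeartbeats 1000000

namespace MaximalClassFrame

variable (p : ℕ) [Fact p.Prime]
variable (K : Type) [Field K] [Algebra ℚ_[p] K] [Algebra ℤ_[p] K]
  [IsScalarTower ℤ_[p] ℚ_[p] K]

/-- The maximal order `𝒪` of `K`: the integral closure of `ℤ_p` in `K`. -/
noncomputable abbrev 𝒪 : Subalgebra ℤ_[p] K := integralClosure ℤ_[p] K

variable (θ : 𝒪 p K)

/-- The maximal ideal `𝔭` of `𝒪`, generated by `κ = θ - 1`. -/
noncomputable def pid : Ideal (𝒪 p K) := Ideal.span {θ - 1}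

/-- A `ℤ_p`-bilinear map `γ : 𝒪 × 𝒪 → 𝒪` is `P`-equivariant if it is
alternating and satisfies `γ(θx, θy) = θ·γ(x,y)` for all `x, y`. -/
def IsPEquivariant (γ : 𝒪 p K →ₗ[ℤ_[p]] 𝒪 p K →ₗ[ℤ_[p]] 𝒪 p K) : Prop :=
  (∀ x, γ x x = 0) ∧ ∀ x y, γ (θ * x) (θ * y) = θ * γ x y

/-- `γ ∈ Ĥ_i`: the additive subgroup of `𝒪` generated by
`{γ(x,y) : x, y ∈ 𝔭^i}` equals `𝔭^(2i+1)`. -/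
def InHhat (i : ℕ) (γ : 𝒪 p K →ₗ[ℤ_[p]] 𝒪 p K →ₗ[ℤ_[p]] 𝒪 p K) : Prop :=
  Submodule.span ℤ (Set.image2 (fun x y => γ x y)
      ((pid p K θ ^ i : Ideal (𝒪 p K)) : Set (𝒪 p K))
      ((pid p K θ ^ i : Ideal (𝒪 p K)) : Set (𝒪 p K)))
    = (pid p K θ ^ (2 * i + 1)).restrictScalars ℤ

variable (σ : ℤ → (K →ₐ[ℚ_[p]] K))

/-- The map `ϑ_a(x,y) = σ_a(x)·σ_{1-a}(y) − σ_{1-a}(x)·σ_a(y)` on `K × K`. -/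
noncomputable def thetaMap (a : ℤ) : K → K → K :=
  fun x y => σ a x * σ (1 - a) y - σ (1 - a) x * σ a y

section

set_option linter.unusedSectionVars false

open Polynomial in
theorem isEisensteinAt_cyclotomic_comp_X_add_one :
    ((cyclotomic p ℤ_[p]).comp (X + 1)).IsEisensteinAt (Submodule.span ℤ_[p] {(p : ℤ_[p])}) := by
  have hE := cyclotomic_comp_X_add_one_isEisensteinAt p
  have hmap : (cyclotomic p ℤ_[p]).comp (X + 1) =
      ((cyclotomic p ℤ).comp (X + 1)).map (Int.castRingHom ℤ_[p]) := by
    simp [Polynomial.map_comp]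
  have hmonic : ((cyclotomic p ℤ).comp (X + 1)).Monic := by
    rw [show (X + 1 : ℤ[X]) = X + C 1 by simp]
    exact (cyclotomic.monic p ℤ).comp (monic_X_add_C 1) (by rw [natDegree_X_add_C]; exact one_ne_zero)
  have hprime : Prime (p : ℤ_[p]) := PadicInt.prime_p
  refine Monic.isEisensteinAt_of_mem_of_notMem (hmap ▸ hmonic.map _) ?_ (fun {n} hn => ?_) ?_
  · exact Ideal.IsPrime.ne_top ((Ideal.span_singleton_prime hprime.ne_zero).2 hprime)
  · rw [hmap, hmonic.natDegree_map] at hn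
    have h := hE.mem hn
    rw [Ideal.submodule_span_eq, Ideal.mem_span_singleton] at h ⊢
    rw [hmap, coeff_map]
    simpa using map_dvd (Int.castRingHom ℤ_[p]) h
  · rw [coeff_zero_eq_eval_zero, eval_comp, Ideal.submodule_span_eq, Ideal.span_singleton_pow,
      Ideal.mem_span_singleton]
    simp only [eval_add, eval_X, eval_one, zero_add, eval_one_cyclotomic_prime]
    intro h
    refine hprime.not_isUnit (isUnit_of_dvd_one ((mul_dvd_mul_iff_left hprime.ne_zero).1 ?_))
    simpa [sq] using h

open Polynomial in
theorem minpoly_primitiveRoot_sub_one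
    [FaithfulSMul ℤ_[p] K] {ζ : K} (hζ : IsPrimitiveRoot ζ p) :
    minpoly ℤ_[p] (ζ - 1) = (cyclotomic p ℤ_[p]).comp (X + 1) := by
  have hE := isEisensteinAt_cyclotomic_comp_X_add_one p
  have hprime : Prime (p : ℤ_[p]) := PadicInt.prime_p
  have hmonic : ((cyclotomic p ℤ_[p]).comp (X + 1)).Monic := by
    rw [show (X + 1 : ℤ_[p][X]) = X + C 1 by simp]
    exact (cyclotomic.monic p _).comp (monic_X_add_C 1) (by rw [natDegree_X_add_C]; exact one_ne_zero)
  have hroot : aeval (ζ - 1) ((cyclotomic p ℤ_[p]).comp (X + 1)) = 0 := by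
    have := hζ.isRoot_cyclotomic (Fact.out : p.Prime).pos
    rw [aeval_comp, aeval_def, eval₂_eq_eval_map, map_cyclotomic]
    simpa using this
  have hint : IsIntegral ℤ_[p] (ζ - 1) := ⟨_, hmonic, hroot⟩
  have hirr := hE.irreducible
    ((Ideal.span_singleton_prime hprime.ne_zero).2 hprime) hmonic.isPrimitive (by
      rw [show (X + 1 : ℤ_[p][X]) = X + C 1 by simp, natDegree_comp, natDegree_X_add_C, mul_one,
        natDegree_cyclotomic]
      exact Nat.totient_pos.2 (Fact.out : p.Prime).pos)
  refine eq_of_monic_of_associated (minpoly.monic hint) hmonic ?_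
  exact (hirr.dvd_iff.1 (minpoly.isIntegrallyClosed_dvd hint hroot)).resolve_left
    (minpoly.not_isUnit _ _) |>.symm

theorem exists_prime_pow_smul_mem_adjoin {ζ : K}
    (hgen : Algebra.adjoin ℚ_[p] {ζ} = ⊤) (z : K) :
    ∃ n : ℕ, (p : ℤ_[p]) ^ n • z ∈ Algebra.adjoin ℤ_[p] {ζ} := by
  obtain ⟨⟨t, ht⟩, h⟩ := multiple_mem_adjoin_of_mem_localization_adjoin (nonZeroDivisors ℤ_[p])
    ℚ_[p] {ζ} z (hgen ▸ Algebra.mem_top)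
  have ht0 : t ≠ 0 := nonZeroDivisors.ne_zero ht
  refine ⟨t.valuation, ?_⟩
  have hspec := PadicInt.unitCoeff_spec ht0
  have heq : (p : ℤ_[p]) ^ t.valuation = ((PadicInt.unitCoeff ht0)⁻¹ : ℤ_[p]ˣ) * t := by
    rw [Units.eq_inv_mul_iff_mul_eq, ← hspec]
  rw [heq, mul_smul]
  exact Subalgebra.smul_mem _ h _

theorem mem_adjoin_primitiveRoot_of_isIntegral {ζ : K}
    (hζ : IsPrimitiveRoot ζ p) (hgen : Algebra.adjoin ℚ_[p] {ζ} = ⊤) {z : K}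
    (hz : IsIntegral ℤ_[p] z) : z ∈ Algebra.adjoin ℤ_[p] {ζ} := by
  have : FaithfulSMul ℤ_[p] K := FaithfulSMul.trans ℤ_[p] ℚ_[p] K
  have hζint : IsIntegral ℤ_[p] ζ := hζ.isIntegral (Fact.out : p.Prime).pos |>.tower_top
  have hκint : IsIntegral ℤ_[p] (ζ - 1) := hζint.sub isIntegral_one
  have hgen' : Algebra.adjoin ℚ_[p] {ζ - 1} = ⊤ := by
    rw [eq_top_iff, ← hgen]
    refine Algebra.adjoin_le (Set.singleton_subset_iff.2 ?_)
    have := add_mem (Algebra.self_mem_adjoin_singleton ℚ_[p] (ζ - 1)) (one_mem _)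
    simpa using this
  let B := PowerBasis.ofAdjoinEqTop hκint.tower_top hgen'
  have hB : B.gen = ζ - 1 := PowerBasis.ofAdjoinEqTop_gen _ _
  have hprime : Prime (p : ℤ_[p]) := PadicInt.prime_p
  obtain ⟨n, hn⟩ := exists_prime_pow_smul_mem_adjoin p K hgen' z
  have key := mem_adjoin_of_smul_prime_pow_smul_of_minpoly_isEisensteinAt (K := ℚ_[p]) (B := B) hprime
    (hB ▸ hκint) hz (hB ▸ hn) (by
      rw [hB, minpoly_primitiveRoot_sub_one p K hζ]
      exact isEisensteinAt_cyclotomic_comp_X_add_one p)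
  rw [hB] at key
  refine Algebra.adjoin_le (Set.singleton_subset_iff.2 ?_) key
  exact sub_mem (Algebra.self_mem_adjoin_singleton _ _) (one_mem _)

section PowerDifferences

variable {R A ι : Type*} [CommRing R] [CommRing A] [Algebra R A] [Fintype ι] {N : Submodule R A}
  {s t : R} {α β u d : ι → A}

theorem sum_powDiff_add_two (hsum : ∀ k, α k + β k = algebraMap R A s - u k)
    (hprod : ∀ k, α k * β k = algebraMap R A t) (n j : ℕ) :
    ∑ k, d k * (α k ^ (n + 2) - β k ^ (n + 2)) * u k ^ j =
      s • ∑ k, d k * (α k ^ (n + 1) - β k ^ (n + 1)) * u k ^ j -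
        ∑ k, d k * (α k ^ (n + 1) - β k ^ (n + 1)) * u k ^ (j + 1) -
        t • ∑ k, d k * (α k ^ n - β k ^ n) * u k ^ j := by
  simp only [Algebra.smul_def, Finset.mul_sum, ← Finset.sum_sub_distrib]
  refine Finset.sum_congr rfl fun k _ => ?_
  rw [← hprod k, eq_add_of_sub_eq (hsum k).symm]
  ring

theorem sum_powDiff_mem_of_sum_pow_mem (hsum : ∀ k, α k + β k = algebraMap R A s - u k)
    (hprod : ∀ k, α k * β k = algebraMap R A t)
    (h : ∀ j : ℕ, ∑ k, d k * (α k - β k) * u k ^ j ∈ N) (n j : ℕ) :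
    ∑ k, d k * (α k ^ n - β k ^ n) * u k ^ j ∈ N := by
  induction n using Nat.twoStepInduction generalizing j with
  | zero => simp
  | one => simpa using h j
  | more n ih₀ ih₁ =>
    rw [sum_powDiff_add_two hsum hprod]
    exact sub_mem (sub_mem (N.smul_mem _ (ih₁ j)) (ih₁ (j + 1))) (N.smul_mem _ (ih₀ j))

theorem sum_pow_mem_of_sum_powDiff_mem (hsum : ∀ k, α k + β k = algebraMap R A s - u k)
    (hprod : ∀ k, α k * β k = algebraMap R A t)
    (h : ∀ n : ℕ, ∑ k, d k * (α k ^ n - β k ^ n) ∈ N) (j : ℕ) :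
    ∑ k, d k * (α k - β k) * u k ^ j ∈ N := by
  suffices h' : ∀ n, ∑ k, d k * (α k ^ n - β k ^ n) * u k ^ j ∈ N by simpa using h' 1
  induction j with
  | zero => simpa using h
  | succ j ih =>
    rintro (_ | n)
    · simp
    · have hrec : ∑ k, d k * (α k ^ (n + 1) - β k ^ (n + 1)) * u k ^ (j + 1) =
          s • ∑ k, d k * (α k ^ (n + 1) - β k ^ (n + 1)) * u k ^ j -
            t • ∑ k, d k * (α k ^ n - β k ^ n) * u k ^ j -
            ∑ k, d k * (α k ^ (n + 2) - β k ^ (n + 2)) * u k ^ j := by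
        rw [sum_powDiff_add_two hsum hprod]
        abel
      rw [hrec]
      exact sub_mem (sub_mem (N.smul_mem _ (ih _)) (N.smul_mem _ (ih _))) (ih _)

open Polynomial in
theorem sum_pow_mem_of_lt_card {U : ι → R} {e : ι → A}
    (h : ∀ j < Fintype.card ι, ∑ k, e k * algebraMap R A (U k) ^ j ∈ N) (j : ℕ) :
    ∑ k, e k * algebraMap R A (U k) ^ j ∈ N := by
  rcases subsingleton_or_nontrivial R with hR | hR
  · have := Module.subsingleton R A
    rw [Subsingleton.elim (∑ k, _) (0 : A)]
    exact N.zero_mem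
  let χ : R[X] := ∏ k, (X - C (U k))
  have hχ : χ.Monic := monic_prod_of_monic _ _ fun k _ => monic_X_sub_C _
  have hdeg : (X ^ j %ₘ χ).degree < Fintype.card ι := by
    refine (degree_modByMonic_lt _ hχ).trans_eq ?_
    rw [degree_eq_natDegree hχ.ne_zero, natDegree_finsetProd_X_sub_C_eq_card]
    simp
  have hU : ∀ k, U k ^ j = ∑ m ∈ Finset.range (Fintype.card ι), (X ^ j %ₘ χ).coeff m * U k ^ m := by
    intro k
    have hroot : χ.eval (U k) = 0 := by
      rw [eval_prod]
      exact Finset.prod_eq_zero (Finset.mem_univ k) (by simp)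
    have hpos : 0 < Fintype.card ι := Fintype.card_pos_iff.2 ⟨k⟩
    have hlt : (X ^ j %ₘ χ).natDegree < Fintype.card ι := by
      by_cases h0 : X ^ j %ₘ χ = 0
      · simpa [h0] using hpos
      · exact (natDegree_lt_iff_degree_lt h0).2 hdeg
    rw [← eval_eq_sum_range' hlt, modByMonic_eq_sub_mul_div]
    simp [hroot]
  have hrw : ∑ k, e k * algebraMap R A (U k) ^ j =
      ∑ m ∈ Finset.range (Fintype.card ι),
        (X ^ j %ₘ χ).coeff m • ∑ k, e k * algebraMap R A (U k) ^ m := by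
    simp only [Finset.smul_sum]
    rw [Finset.sum_comm]
    refine Finset.sum_congr rfl fun k _ => ?_
    rw [← map_pow, hU, map_sum, Finset.mul_sum]
    refine Finset.sum_congr rfl fun m _ => ?_
    rw [Algebra.smul_def, map_mul, map_pow]
    ring
  rw [hrw]
  exact sum_mem fun m hm => N.smul_mem _ (h m (Finset.mem_range.1 hm))

end PowerDifferences

variable {p K}

/-- The fractional ideal `𝔭^s`, viewed inside `K`. -/
noncomputable def pidPow (s : ℕ) : Submodule (𝒪 p K) K :=
  Submodule.span (𝒪 p K) {((θ : K) - 1) ^ s}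

variable {θ σ}

theorem mem_pidPow_iff {s : ℕ} {z : K} :
    z ∈ pidPow θ s ↔ ∃ a ∈ pid p K θ ^ s, (a : K) = z := by
  rw [pidPow, Submodule.mem_span_singleton, pid, Ideal.span_singleton_pow]
  constructor
  · rintro ⟨a, rfl⟩
    exact ⟨a * (θ - 1) ^ s, Ideal.mem_span_singleton.2 (dvd_mul_left _ _), by
      simp [Algebra.smul_def]⟩
  · rintro ⟨a, ha, rfl⟩
    obtain ⟨b, rfl⟩ := Ideal.mem_span_singleton.1 ha
    exact ⟨b, by simp [Algebra.smul_def, mul_comm]⟩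

theorem coe_mem_pidPow {s : ℕ} {x : 𝒪 p K} (hx : x ∈ pid p K θ ^ s) : (x : K) ∈ pidPow θ s :=
  mem_pidPow_iff.2 ⟨x, hx, rfl⟩

theorem sub_one_pow_mul_mem_pidPow_iff (hκ : (θ : K) - 1 ≠ 0) {s n : ℕ} {z : K} :
    ((θ : K) - 1) ^ s * z ∈ pidPow θ (s + n) ↔ z ∈ pidPow θ n := by
  simp only [pidPow, Submodule.mem_span_singleton, Algebra.smul_def]
  refine exists_congr fun a => ?_
  rw [pow_add, mul_left_comm, mul_right_inj' (pow_ne_zero s hκ)]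

theorem mem_pidPow_zero_iff {z : K} : z ∈ pidPow θ 0 ↔ z ∈ 𝒪 p K := by
  rw [mem_pidPow_iff]
  simp

theorem exists_sub_one_pow_prime_eq (hθ : IsPrimitiveRoot (θ : K) p) :
    ∃ r : 𝒪 p K, (θ - 1) ^ p = p * r := by
  obtain ⟨r, hr⟩ := exists_add_pow_prime_eq (Fact.out : p.Prime) (θ - 1) 1
  have hθp : θ ^ p = 1 := Subtype.ext (by simpa using hθ.pow_eq_one)
  rw [sub_add_cancel, hθp, one_pow] at hr
  exact ⟨-((θ - 1) * r), by linear_combination -hr⟩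

theorem not_isUnit_sub_one (hθ : IsPrimitiveRoot (θ : K) p) : ¬ IsUnit (θ - 1) := by
  intro hu
  obtain ⟨r, hr⟩ := exists_sub_one_pow_prime_eq hθ
  have hpu : IsUnit (algebraMap ℤ_[p] (𝒪 p K) p) := by
    rw [map_natCast]
    exact isUnit_of_mul_isUnit_left (hr ▸ hu.pow p)
  have : FaithfulSMul ℤ_[p] K := FaithfulSMul.trans ℤ_[p] ℚ_[p] K
  exact PadicInt.prime_p.not_isUnit (isUnit_of_map_unit _ _ hpu)

theorem exists_prime_pow_mul_mem_integralClosure (hgen : Algebra.adjoin ℚ_[p] {(θ : K)} = ⊤)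
    (z : K) : ∃ n : ℕ, (p : K) ^ n * z ∈ 𝒪 p K := by
  obtain ⟨n, hn⟩ := exists_prime_pow_smul_mem_adjoin p K hgen z
  refine ⟨n, ?_⟩
  have := Algebra.adjoin_le (S := 𝒪 p K) (Set.singleton_subset_iff.2 θ.2) hn
  simpa [Algebra.smul_def] using this

theorem exists_sub_one_pow_mul_mem_integralClosure (hθ : IsPrimitiveRoot (θ : K) p)
    (hgen : Algebra.adjoin ℚ_[p] {(θ : K)} = ⊤) (z : K) :
    ∃ n : ℕ, ((θ : K) - 1) ^ n * z ∈ 𝒪 p K := by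
  obtain ⟨n, hn⟩ := exists_prime_pow_mul_mem_integralClosure hgen z
  obtain ⟨r, hr⟩ := exists_sub_one_pow_prime_eq hθ
  refine ⟨p * n, ?_⟩
  have hr' : ((θ : K) - 1) ^ p = p * r := by simpa using congrArg (Subtype.val) hr
  rw [pow_mul, hr', mul_pow, mul_right_comm]
  exact mul_mem hn (pow_mem r.2 n)

theorem exists_zpow_eq_pow (hθ : IsPrimitiveRoot (θ : K) p) (j : ℤ) :
    ∃ n : ℕ, (θ : K) ^ j = (θ : K) ^ n := by
  have hp0 : (p : ℤ) ≠ 0 := mod_cast (Fact.out : p.Prime).ne_zero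
  refine ⟨(j % p).toNat, ?_⟩
  rw [← zpow_natCast, Int.toNat_of_nonneg (Int.emod_nonneg j hp0)]
  conv_lhs => rw [← Int.emod_add_mul_ediv j p,
    zpow_add₀ (hθ.ne_zero (Fact.out : p.Prime).ne_zero), zpow_mul, zpow_natCast, hθ.pow_eq_one,
    one_zpow, mul_one]

theorem algHom_apply_mem_pidPow (hθ : IsPrimitiveRoot (θ : K) p) {f : K →ₐ[ℚ_[p]] K} {j : ℤ}
    (hf : f (θ : K) = (θ : K) ^ j) {s : ℕ} {x : K} (hx : x ∈ pidPow θ s) :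
    f x ∈ pidPow θ s := by
  obtain ⟨a, rfl⟩ := Submodule.mem_span_singleton.1 hx
  obtain ⟨n, hn⟩ := exists_zpow_eq_pow hθ j
  obtain ⟨b, hb⟩ := sub_one_dvd_pow_sub_one θ n
  have hb' : f ((θ : K) - 1) = ((θ : K) - 1) * b := by
    rw [map_sub, map_one, hf, hn]
    simpa using congrArg Subtype.val hb
  have ha : IsIntegral ℤ_[p] (f a) := 
    (show IsIntegral ℤ_[p] (a : K) from a.2).map (f.restrictScalars ℤ_[p])
  refine Submodule.mem_span_singleton.2 ⟨⟨f a, ha⟩ * b ^ s, ?_⟩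
  simp only [Algebra.smul_def, map_mul, map_pow, hb']
  simp [mul_pow]
  ring

section AlternatingSum

variable {ι : Type*} [Fintype ι] (c : ι → K) (f g : ι → K →ₐ[ℚ_[p]] K)

/-- The alternating form `(x, y) ↦ Σ_k c_k·(f_k(x)·g_k(y) − g_k(x)·f_k(y))`. -/
noncomputable def altSum (x y : K) : K :=
  ∑ k, c k * (f k x * g k y - g k x * f k y)

variable {c f g}

theorem altSum_swap (x y : K) : altSum c f g y x = -altSum c f g x y := by
  simp only [altSum, ← Finset.sum_neg_distrib]
  exact Finset.sum_congr rfl fun k _ => by ring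

theorem altSum_add_left (x x' y : K) :
    altSum c f g (x + x') y = altSum c f g x y + altSum c f g x' y := by
  simp only [altSum, ← Finset.sum_add_distrib, map_add]
  exact Finset.sum_congr rfl fun k _ => by ring

theorem altSum_smul_left (r : ℤ_[p]) (x y : K) :
    altSum c f g (r • x) y = r • altSum c f g x y := by
  have hr : ∀ z : K, r • z = algebraMap ℚ_[p] K r * z := fun z => by
    rw [Algebra.smul_def, IsScalarTower.algebraMap_apply ℤ_[p] ℚ_[p] K]; rfl
  simp only [altSum, hr, Finset.mul_sum, map_mul, AlgHom.commutes]
  exact Finset.sum_congr rfl fun k _ => by ring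

theorem sub_one_mul_altSum (hfg : ∀ k, f k θ * g k θ = θ) (x y : K) :
    ((θ : K) - 1) * altSum c f g x y =
      altSum c f g (((θ : K) - 1) * x) (((θ : K) - 1) * y) +
        altSum c f g (((θ : K) - 1) * x) y + altSum c f g x (((θ : K) - 1) * y) := by
  simp only [altSum, Finset.mul_sum, ← Finset.sum_add_distrib, map_mul, map_sub, map_one]
  refine Finset.sum_congr rfl fun k _ => ?_
  linear_combination (-(c k * (f k x * g k y - g k x * f k y))) * hfg k

theorem altSum_sub_one_pow_mul_pow (hfg : ∀ k, f k θ * g k θ = θ) (i m n : ℕ) :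
    altSum c f g (((θ : K) - 1) ^ i * (θ : K) ^ (m + n)) (((θ : K) - 1) ^ i * (θ : K) ^ n) =
      (θ : K) ^ n * ∑ k, c k * ((f k θ - 1) * (g k θ - 1)) ^ i * (f k θ ^ m - g k θ ^ m) := by
  simp only [altSum, Finset.mul_sum, map_mul, map_pow, map_sub, map_one]
  refine Finset.sum_congr rfl fun k _ => ?_
  rw [← congrArg (· ^ n) (hfg k)]
  simp only [mul_pow, pow_add]
  ring

theorem exists_altSum_mem_integralClosure (hθ : IsPrimitiveRoot (θ : K) p)
    (hgen : Algebra.adjoin ℚ_[p] {(θ : K)} = ⊤)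
    (hf : ∀ k, ∃ j : ℤ, f k θ = (θ : K) ^ j) (hg : ∀ k, ∃ j : ℤ, g k θ = (θ : K) ^ j) :
    ∃ M : ℕ, ∀ x y : K, x ∈ pidPow θ M → y ∈ pidPow θ 0 → altSum c f g x y ∈ 𝒪 p K := by
  choose n hn using fun k => exists_sub_one_pow_mul_mem_integralClosure hθ hgen (c k)
  refine ⟨Finset.univ.sup n, fun x y hx hy => sum_mem fun k _ => ?_⟩
  have hmul : ∀ a b : K, a ∈ pidPow θ (Finset.univ.sup n) → b ∈ pidPow θ 0 →
      c k * (a * b) ∈ 𝒪 p K := by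
    intro a b ha hb
    obtain ⟨a, rfl⟩ := Submodule.mem_span_singleton.1 ha
    obtain ⟨d, hd⟩ := Nat.exists_eq_add_of_le (Finset.le_sup (f := n) (Finset.mem_univ k))
    rw [Algebra.smul_def, hd, pow_add]
    have h := mul_mem (mul_mem (mul_mem a.2 (pow_mem (θ - 1).2 d)) (mem_pidPow_zero_iff.1 hb)) (hn k)
    convert h using 1
    simp
    ring
  obtain ⟨j, hj⟩ := hf k
  obtain ⟨j', hj'⟩ := hg k
  rw [mul_sub]
  exact sub_mem
    (hmul _ _ (algHom_apply_mem_pidPow hθ hj hx) (algHom_apply_mem_pidPow hθ hj' hy))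
    (hmul _ _ (algHom_apply_mem_pidPow hθ hj' hx) (algHom_apply_mem_pidPow hθ hj hy))

theorem pidPow_antitone : Antitone (pidPow (p := p) (K := K) θ) := by
  intro s t hst z hz
  obtain ⟨a, ha, rfl⟩ := mem_pidPow_iff.1 hz
  exact coe_mem_pidPow (Ideal.pow_le_pow_right hst ha)

theorem sub_one_mul_mem_pidPow {s : ℕ} {x : K} (hx : x ∈ pidPow θ s) :
    ((θ : K) - 1) * x ∈ pidPow θ (s + 1) := by
  obtain ⟨a, rfl⟩ := Submodule.mem_span_singleton.1 hx
  exact Submodule.mem_span_singleton.2 ⟨a, by rw [mul_smul_comm, pow_succ']⟩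

/-- If every integral value of the form on `𝔭^i × 𝔭^i` lies in `𝔭`, then all its values there
are integral. -/
theorem altSum_mem_integralClosure (hθ : IsPrimitiveRoot (θ : K) p)
    (hgen : Algebra.adjoin ℚ_[p] {(θ : K)} = ⊤) (hκ : (θ : K) - 1 ≠ 0)
    (hf : ∀ k, ∃ j : ℤ, f k θ = (θ : K) ^ j) (hg : ∀ k, ∃ j : ℤ, g k θ = (θ : K) ^ j)
    (hfg : ∀ k, f k θ * g k θ = θ) {i : ℕ}
    (hint : ∀ x y : K, x ∈ pidPow θ i → y ∈ pidPow θ i → altSum c f g x y ∈ 𝒪 p K →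
      altSum c f g x y ∈ pidPow θ 1)
    {x y : K} (hx : x ∈ pidPow θ i) (hy : y ∈ pidPow θ i) : altSum c f g x y ∈ 𝒪 p K := by
  obtain ⟨M, hM⟩ := exists_altSum_mem_integralClosure (c := c) hθ hgen hf hg
  suffices h : ∀ n s t : ℕ, 2 * M ≤ s + t + n → i ≤ s → i ≤ t → ∀ x y : K,
      x ∈ pidPow θ s → y ∈ pidPow θ t → altSum c f g x y ∈ 𝒪 p K from
    h (2 * M) i i (by omega) le_rfl le_rfl x y hx hy
  intro n
  induction n with
  | zero =>
    intro s t hst _ _ x y hx hy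
    rcases le_or_gt M s with hs | hs
    · exact hM x y (pidPow_antitone hs hx) (pidPow_antitone t.zero_le hy)
    · rw [altSum_swap]
      exact neg_mem (hM y x (pidPow_antitone (by omega) hy) (pidPow_antitone s.zero_le hx))
  | succ n ih =>
    intro s t hst hs ht x y hx hy
    have hx' := sub_one_mul_mem_pidPow hx
    have hy' := sub_one_mul_mem_pidPow hy
    have hstep : ∀ s' t', s + t + 1 ≤ s' + t' → i ≤ s' → i ≤ t' → ∀ x y : K,
        x ∈ pidPow θ s' → y ∈ pidPow θ t' → altSum c f g x y ∈ pidPow θ 1 :=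
      fun s' t' hst' hs' ht' x y hx hy => hint x y (pidPow_antitone hs' hx)
        (pidPow_antitone ht' hy) (ih s' t' (by omega) hs' ht' x y hx hy)
    have hmem : ((θ : K) - 1) ^ 1 * altSum c f g x y ∈ pidPow θ (1 + 0) := by
      rw [pow_one, sub_one_mul_altSum hfg]
      exact add_mem (add_mem
        (hstep _ _ (by omega) (by omega) (by omega) _ _ hx' hy')
        (hstep _ _ (by omega) (by omega) (by omega) _ _ hx' hy))
        (hstep _ _ (by omega) (by omega) (by omega) _ _ hx hy')
    exact mem_pidPow_zero_iff.1 ((sub_one_pow_mul_mem_pidPow_iff hκ).1 hmem)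

open Polynomial in
theorem altSum_mem_of_sum_powDiff_mem (hθ : IsPrimitiveRoot (θ : K) p)
    (hgen : Algebra.adjoin ℚ_[p] {(θ : K)} = ⊤) (hfg : ∀ k, f k θ * g k θ = θ) {i : ℕ}
    {N : Submodule (𝒪 p K) K}
    (h : ∀ n, ∑ k, c k * ((f k θ - 1) * (g k θ - 1)) ^ i * (f k θ ^ n - g k θ ^ n) ∈ N)
    {x y : K} (hx : x ∈ pidPow θ i) (hy : y ∈ pidPow θ i) : altSum c f g x y ∈ N := by
  have hpoly : ∀ z ∈ pidPow θ i, ∃ P : ℤ_[p][X], ((θ : K) - 1) ^ i * aeval (θ : K) P = z := by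
    intro z hz
    obtain ⟨a, rfl⟩ := Submodule.mem_span_singleton.1 hz
    have ha := mem_adjoin_primitiveRoot_of_isIntegral p K hθ hgen a.2
    rw [Algebra.adjoin_singleton_eq_range_aeval] at ha
    obtain ⟨P, hP⟩ := ha
    exact ⟨P, by rw [Algebra.smul_def, mul_comm]; exact congrArg (· * _) hP⟩
  have hmon : ∀ m n : ℕ, altSum c f g (((θ : K) - 1) ^ i * (θ : K) ^ m)
      (((θ : K) - 1) ^ i * (θ : K) ^ n) ∈ N := by
    intro m n
    wlog hmn : n ≤ m generalizing m n
    · rw [altSum_swap]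
      exact neg_mem (this n m (by omega))
    · obtain ⟨d, rfl⟩ := Nat.exists_eq_add_of_le' hmn
      rw [altSum_sub_one_pow_mul_pow hfg]
      exact N.smul_mem (θ ^ n) (h d)
  have hspan : ∀ y, (∀ m : ℕ, altSum c f g (((θ : K) - 1) ^ i * (θ : K) ^ m) y ∈ N) →
      ∀ P : ℤ_[p][X], altSum c f g (((θ : K) - 1) ^ i * aeval (θ : K) P) y ∈ N := by
    intro y hy P
    induction P using Polynomial.induction_on' with
    | add P Q hP hQ =>
      rw [map_add, mul_add, altSum_add_left]
      exact add_mem hP hQ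
    | monomial n r =>
      rw [aeval_monomial, ← Algebra.smul_def, mul_smul_comm, altSum_smul_left]
      exact N.smul_of_tower_mem r (hy n)
  obtain ⟨P, rfl⟩ := hpoly x hx
  obtain ⟨Q, rfl⟩ := hpoly y hy
  refine hspan _ (fun m => ?_) P
  rw [altSum_swap]
  exact neg_mem (hspan _ (fun n => hmon n m) Q)

end AlternatingSum

end

/-- Let `l = (p−3)/2` and let `γ = Σ_{a=2}^{l+1} c_a·ϑ_a`.  With
`u_a = (θ^a−1)(θ^{1−a}−1)`, `v_a = (θ^a−θ^{1−a})·u_a^i·κ^{−(2i+1)}`, `V_i` the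
diagonal matrix with entries `v_a` and `B` the Vandermonde matrix `(u_a^{j−1})`:
if `γ ∈ Ĥ_i`, then the row vector `(c_2,…,c_{l+1})·V_i·B` lies in `𝒪^l ∖ 𝔭^l`. -/
theorem frame_coefficient_criterion (hp : 5 ≤ p) (hθ : IsPrimitiveRoot (θ : K) p)
    (hgen : Algebra.adjoin ℚ_[p] {(θ : K)} = ⊤)
    (hσ : ∀ j : ℤ, ¬ ((p : ℤ) ∣ j) → σ j (θ : K) = (θ : K) ^ j)
    (i : ℕ) (c : Fin ((p - 3) / 2) → K)
    (hHhat : Submodule.span ℤ {z : 𝒪 p K | ∃ x ∈ pid p K θ ^ i, ∃ y ∈ pid p K θ ^ i,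
        (z : K) = ∑ k : Fin ((p - 3) / 2),
          c k * thetaMap p K σ (((k : ℕ) + 2 : ℕ) : ℤ) (x : K) (y : K)}
      = (pid p K θ ^ (2 * i + 1)).restrictScalars ℤ) :
    let u : Fin ((p - 3) / 2) → K := fun k =>
      ((θ : K) ^ ((((k : ℕ) + 2 : ℕ)) : ℤ) - 1) * ((θ : K) ^ (1 - ((((k : ℕ) + 2 : ℕ)) : ℤ)) - 1)
    let v : Fin ((p - 3) / 2) → K := fun k =>
      ((θ : K) ^ ((((k : ℕ) + 2 : ℕ)) : ℤ) - (θ : K) ^ (1 - ((((k : ℕ) + 2 : ℕ)) : ℤ)))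
        * u k ^ i * ((θ : K) - 1) ^ (-(2 * (i : ℤ) + 1))
    let w : Fin ((p - 3) / 2) → K :=
      Matrix.vecMul (Matrix.vecMul c (Matrix.diagonal v)) (Matrix.of fun k j => u k ^ (j : ℕ))
    (∀ k, w k ∈ 𝒪 p K) ∧ ∃ k, ¬ ∃ z ∈ pid p K θ, (z : K) = w k := by
  intro u v w
  set κ : K := (θ : K) - 1 with hκdef
  have hκ : κ ≠ 0 := sub_ne_zero.2 (hθ.ne_one (by omega))
  have hθ0 : (θ : K) ≠ 0 := hθ.ne_zero (by omega)
  let a : Fin ((p - 3) / 2) → ℤ := fun k => (((k : ℕ) + 2 : ℕ) : ℤ)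
  have hf : ∀ k, σ (a k) θ = (θ : K) ^ a k := fun k => hσ _ fun h => by
    have := Int.le_of_dvd (by simp only [a]; omega) h
    simp only [a] at this
    omega
  have hg : ∀ k, σ (1 - a k) θ = (θ : K) ^ (1 - a k) := fun k => hσ _ fun h => by
    have := Int.le_of_dvd (by simp only [a]; omega) ((dvd_neg).2 h)
    simp only [a] at this
    omega
  have hprod : ∀ k, (θ : K) ^ a k * (θ : K) ^ (1 - a k) = θ := fun k => by
    rw [← zpow_add₀ hθ0]
    simp
  have hfg : ∀ k, σ (a k) θ * σ (1 - a k) θ = θ := fun k => by rw [hf, hg, hprod]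
  let γ : K → K → K := altSum c (fun k => σ (a k)) (fun k => σ (1 - a k))
  have hvalues : ∀ x y : K, x ∈ pidPow θ i → y ∈ pidPow θ i → γ x y ∈ 𝒪 p K →
      γ x y ∈ pidPow θ (2 * i + 1) := by
    intro x y hx hy hγ
    obtain ⟨x, hx', rfl⟩ := mem_pidPow_iff.1 hx
    obtain ⟨y, hy', rfl⟩ := mem_pidPow_iff.1 hy
    have hspan := Submodule.subset_span (R := ℤ) (show (⟨_, hγ⟩ : 𝒪 p K) ∈ {z : 𝒪 p K |
      ∃ x ∈ pid p K θ ^ i, ∃ y ∈ pid p K θ ^ i, (z : K) = ∑ k : Fin ((p - 3) / 2),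
          c k * thetaMap p K σ (((k : ℕ) + 2 : ℕ) : ℤ) (x : K) (y : K)} from
      ⟨x, hx', y, hy', rfl⟩)
    rw [hHhat] at hspan
    exact coe_mem_pidPow hspan
  have hmem : ∀ x y : K, x ∈ pidPow θ i → y ∈ pidPow θ i → γ x y ∈ pidPow θ (2 * i + 1) := by
    intro x y hx hy
    exact hvalues x y hx hy (altSum_mem_integralClosure hθ hgen hκ (fun k => ⟨_, hf k⟩)
      (fun k => ⟨_, hg k⟩) hfg (fun x y hx hy h => pidPow_antitone (by omega)
        (hvalues x y hx hy h)) hx hy)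
  have hnot : ¬ ∀ x y : K, x ∈ pidPow θ i → y ∈ pidPow θ i → γ x y ∈ pidPow θ (2 * i + 2) := by
    intro h
    have hle : (pid p K θ ^ (2 * i + 1)).restrictScalars ℤ ≤
        (pid p K θ ^ (2 * i + 2)).restrictScalars ℤ := by
      rw [← hHhat, Submodule.span_le]
      rintro z ⟨x, hx, y, hy, hz⟩
      obtain ⟨b, hb, hbz⟩ := mem_pidPow_iff.1 (h x y (coe_mem_pidPow hx) (coe_mem_pidPow hy))
      rwa [Subtype.ext (hz.trans hbz.symm)]
    have hmem' : (θ - 1) ^ (2 * i + 1) ∈ pid p K θ ^ (2 * i + 2) :=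
      hle (Ideal.pow_mem_pow (Ideal.mem_span_singleton_self _) _)
    rw [pid, Ideal.span_singleton_pow, Ideal.mem_span_singleton, pow_succ _ (2 * i + 1)] at hmem'
    have hκ' : θ - 1 ≠ 0 := fun h0 => hκ (by simpa using congrArg Subtype.val h0)
    refine not_isUnit_sub_one hθ (isUnit_of_dvd_one
      ((mul_dvd_mul_iff_left (pow_ne_zero (2 * i + 1) hκ')).1 ?_))
    rwa [mul_one]
  have hu : ∀ k, u k ∈ 𝒪 p K := fun k => by
    obtain ⟨m, hm⟩ := exists_zpow_eq_pow hθ (a k)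
    obtain ⟨n, hn⟩ := exists_zpow_eq_pow hθ (1 - a k)
    change ((θ : K) ^ a k - 1) * ((θ : K) ^ (1 - a k) - 1) ∈ 𝒪 p K
    rw [hm, hn]
    exact ((θ ^ m - 1) * (θ ^ n - 1)).2
  have hsum : ∀ k, (θ : K) ^ a k + (θ : K) ^ (1 - a k) =
      algebraMap (𝒪 p K) K (θ + 1) - u k := fun k => by
    change _ = ((θ : K) + 1) - ((θ : K) ^ a k - 1) * ((θ : K) ^ (1 - a k) - 1)
    linear_combination hprod k
  have hw : ∀ j, κ ^ (2 * i + 1) * w j = ∑ k, c k * u k ^ i *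
      ((θ : K) ^ a k - (θ : K) ^ (1 - a k)) * u k ^ (j : ℕ) := by
    intro j
    have hκz : κ ^ (2 * i + 1) * κ ^ (-(2 * (i : ℤ) + 1)) = 1 := by
      rw [← zpow_natCast, ← zpow_add₀ hκ]
      simp
    simp only [w, Matrix.vecMul, dotProduct, Matrix.of_apply, Finset.mul_sum]
    refine Finset.sum_congr rfl fun k _ => ?_
    change κ ^ (2 * i + 1) * (Matrix.vecMul c (Matrix.diagonal v) k * _) = _
    rw [Matrix.vecMul_diagonal]
    change κ ^ (2 * i + 1) * (c k * (((θ : K) ^ a k - (θ : K) ^ (1 - a k)) * u k ^ i *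
      κ ^ (-(2 * (i : ℤ) + 1))) * u k ^ (j : ℕ)) = _
    linear_combination (c k * u k ^ i * ((θ : K) ^ a k - (θ : K) ^ (1 - a k)) * u k ^ (j : ℕ)) * hκz
  have hbase : ∀ s, (κ ^ i * (θ : K) ^ s) ∈ pidPow θ i := fun s =>
    Submodule.mem_span_singleton.2 ⟨θ ^ s, by rw [Algebra.smul_def, mul_comm]; rfl⟩
  have hγ : ∀ n, γ (κ ^ i * (θ : K) ^ n) (κ ^ i * (θ : K) ^ 0) =
      ∑ k, c k * u k ^ i * (((θ : K) ^ a k) ^ n - ((θ : K) ^ (1 - a k)) ^ n) := fun n => by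
    have h := altSum_sub_one_pow_mul_pow (c := c) hfg i n 0
    simp only [hf, hg, add_zero, pow_zero, one_mul] at h
    simpa only [pow_zero] using h
  constructor
  · intro j
    rw [← mem_pidPow_zero_iff, ← sub_one_pow_mul_mem_pidPow_iff hκ (s := 2 * i + 1), hw]
    exact sum_pow_mem_of_sum_powDiff_mem hsum hprod
      (fun n => hγ n ▸ hmem _ _ (hbase n) (hbase 0)) _
  · by_contra! hcon
    refine hnot fun x y hx hy => altSum_mem_of_sum_powDiff_mem hθ hgen hfg (fun n => ?_) hx hy
    simp only [hf, hg]
    have hall : ∀ j : ℕ, ∑ k, c k * u k ^ i * ((θ : K) ^ a k - (θ : K) ^ (1 - a k)) * u k ^ j ∈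
        pidPow θ (2 * i + 2) := by
      refine sum_pow_mem_of_lt_card (U := fun k => (⟨u k, hu k⟩ : 𝒪 p K)) fun j hj => ?_
      rw [Fintype.card_fin] at hj
      have hwj : w ⟨j, hj⟩ ∈ pidPow θ 1 := mem_pidPow_iff.2 (by simpa using hcon ⟨j, hj⟩)
      have h := (sub_one_pow_mul_mem_pidPow_iff hκ (s := 2 * i + 1)).2 hwj
      rw [← hκdef, hw] at h
      exact h
    have h := sum_powDiff_mem_of_sum_pow_mem hsum hprod hall n 0
    simp only [pow_zero, mul_one] at h
    exact h

end MaximalClassFrame
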